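/- arXiv:1607.05102 — 2 statements merged into one kernel-verified Lean document; each statement's English description precedes it below -/
import Mathlib

section
/- Let 1 < p < n and n − p < λ < n. There exists a constant C = C(n, p, λ, β) > 0 such that for every V ∈ L_{1,λ}^β(ℝⁿ), every x ∈ ℝⁿ and every r > 0, ∫_{{y : |x−y|_β < r}} |V(y)| / |x−y|_β^{(n−p)·2|β|/n} dy ≤ C · r^{(λ−(n−p))·2|β|/n} · ‖V‖_{L_{1,λ}^β}. In particular, every V ∈ L_{1,λ}^β(ℝⁿ) belongs to the Stummel class S_p^β. -/
open MeasureTheory Real Set Filter Topology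

/-- The non-isotropic β-distance of `x` to the origin:
`|x|_β = (∑ k, |x k| ^ (1/β k)) ^ ((β₁+⋯+βₙ)/n)`. -/
noncomputable def betaDist (n : ℕ) (β : Fin n → ℝ) (x : Fin n → ℝ) : ℝ :=
  (∑ k, |x k| ^ (1 / β k)) ^ ((∑ k, β k) / n)

/-- The exponent `(n - p) · 2|β|/n` appearing in the Stummel kernel. -/
noncomputable def bexp (n : ℕ) (β : Fin n → ℝ) (p : ℝ) : ℝ :=
  ((n : ℝ) - p) * (2 * (∑ k, β k) / n)

/-- The Stummel modulus generated by the β-distance: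
`η_β(r) = sup_x ∫_{|x-y|_β < r} |V(y)| / |x-y|_β^{(n-p)·2|β|/n} dy`. -/
noncomputable def stummel (n : ℕ) (β : Fin n → ℝ) (p : ℝ) (V : (Fin n → ℝ) → ℝ) (r : ℝ) : ℝ :=
  ⨆ x : Fin n → ℝ, ∫ y in {y : Fin n → ℝ | betaDist n β (x - y) < r},
    |V y| / betaDist n β (x - y) ^ bexp n β p

/-!
Cut the ball `{d < r}`, where `d y = |x - y|_β`, into the shells `r / 2 ^ (j + 1) ≤ d < r / 2 ^ j`.
With `a = (n - p) · 2|β|/n` and `b = λ · 2|β|/n`, the kernel `d ^ (-a)` is at most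
`(r / 2 ^ (j + 1)) ^ (-a)` on the `j`-th shell, whose `|V|`-mass is at most `K (r / 2 ^ j) ^ b`.
Since `a < b`, summing over `j` gives a convergent geometric series of size `K r ^ (b - a)`,
uniformly in `x`, and `r ^ (b - a) → 0` as `r → 0⁺`.
-/

open scoped ENNReal

section DyadicShells

/-- The shell `r / 2 ^ (j + 1) ≤ d < r / 2 ^ j` around the zero set of a distance-like function `d`.
It is closed on the inside so that it lies in an open ball. -/
def dyadicShell {α : Type*} (d : α → ℝ) (r : ℝ) (j : ℕ) : Set α :=
  {y | d y ∈ Ico (r / 2 ^ (j + 1)) (r / 2 ^ j)}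

/-- The sum `2 ^ a * ∑ j, (2 ^ (a - b)) ^ j` of the contributions of all dyadic shells to the
integral of `d ^ (-a)`, for a weight whose mass on `{d < s}` is at most `s ^ b`. -/
noncomputable def dyadicConst (a b : ℝ) : ℝ := 2 ^ a * (1 - 2 ^ (a - b))⁻¹

variable {α : Type*} {d : α → ℝ} {a b r : ℝ}

theorem dyadicConst_pos (hab : a < b) : 0 < dyadicConst a b := by
  have hq : (2 : ℝ) ^ (a - b) < 1 := rpow_lt_one_of_one_lt_of_neg one_lt_two (sub_neg.2 hab)
  exact mul_pos (by positivity) (inv_pos.2 (sub_pos.2 hq))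

theorem setOf_lt_subset_union_iUnion_dyadicShell (hd₀ : ∀ y, 0 ≤ d y) :
    {y | d y < r} ⊆ {y | d y = 0} ∪ ⋃ j, dyadicShell d r j := by
  intro y (hyr : d y < r)
  refine (hd₀ y).eq_or_lt.imp Eq.symm fun hy => mem_iUnion.2 ?_
  have hratio : 1 < r / d y := (one_lt_div hy).2 hyr
  obtain ⟨m, hlower, hupper⟩ := exists_mem_Ioc_zpow (one_pos.trans hratio) one_lt_two
  have hm : 0 < m + 1 := (one_lt_zpow_iff_right₀ one_lt_two).1 (hratio.trans_le hupper)
  lift m to ℕ using by lia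
  norm_cast at hlower hupper
  push_cast at hlower hupper
  exact ⟨m, (div_le_comm₀ hy (by positivity)).1 hupper, (lt_div_comm₀ (by positivity) hy).1 hlower⟩

theorem rpow_neg_mul_rpow_div_two_pow (hr : 0 < r) (a b : ℝ) (j : ℕ) :
    (r / 2 ^ (j + 1)) ^ (-a) * (r / 2 ^ j) ^ b = 2 ^ a * r ^ (b - a) * (2 ^ (a - b)) ^ j := by
  have ht : 0 < r / 2 ^ j := by positivity
  calc (r / 2 ^ (j + 1)) ^ (-a) * (r / 2 ^ j) ^ b
      = 2 ^ a * (r / 2 ^ j) ^ (b - a) := by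
        rw [pow_succ, ← div_div, div_rpow ht.le zero_le_two, rpow_neg zero_le_two, div_inv_eq_mul,
          sub_eq_neg_add, rpow_add ht]
        ring
    _ = 2 ^ a * r ^ (b - a) * (2 ^ (a - b)) ^ j := by
        rw [div_rpow hr.le (by positivity), div_eq_mul_inv, ← rpow_neg (by positivity), neg_sub,
          rpow_pow_comm zero_le_two, mul_assoc]

variable [MeasurableSpace α] {μ : Measure α}

theorem setLIntegral_dyadicShell_mul_rpow_neg_le {g : α → ℝ≥0∞} {K : ℝ≥0∞} (hd : Measurable d)
    (ha : 0 ≤ a) (hgrowth : ∀ s > 0, ∫⁻ y in {y | d y < s}, g y ∂μ ≤ K * .ofReal (s ^ b))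
    (hr : 0 < r) (j : ℕ) :
    ∫⁻ y in dyadicShell d r j, g y * .ofReal (d y ^ (-a)) ∂μ ≤
      K * .ofReal (2 ^ a * r ^ (b - a) * (2 ^ (a - b)) ^ j) := by
  calc ∫⁻ y in dyadicShell d r j, g y * .ofReal (d y ^ (-a)) ∂μ
      ≤ ∫⁻ y in dyadicShell d r j, g y * .ofReal ((r / 2 ^ (j + 1)) ^ (-a)) ∂μ := by
        refine setLIntegral_mono' (hd measurableSet_Ico) fun y hy => ?_
        gcongr g y * ENNReal.ofReal ?_
        exact rpow_le_rpow_of_nonpos (by positivity) hy.1 (neg_nonpos.2 ha)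
    _ = (∫⁻ y in dyadicShell d r j, g y ∂μ) * .ofReal ((r / 2 ^ (j + 1)) ^ (-a)) :=
        lintegral_mul_const' _ _ ENNReal.ofReal_ne_top
    _ ≤ K * .ofReal ((r / 2 ^ j) ^ b) * .ofReal ((r / 2 ^ (j + 1)) ^ (-a)) := by
        gcongr
        exact (lintegral_mono_set fun y hy => hy.2).trans (hgrowth _ (by positivity))
    _ = K * .ofReal (2 ^ a * r ^ (b - a) * (2 ^ (a - b)) ^ j) := by
        rw [mul_assoc, ← ENNReal.ofReal_mul (by positivity), mul_comm (_ ^ b),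
          rpow_neg_mul_rpow_div_two_pow hr]

theorem setLIntegral_mul_rpow_neg_le {g : α → ℝ≥0∞} {K : ℝ≥0∞} (hd : Measurable d)
    (hd₀ : ∀ y, 0 ≤ d y) (ha : 0 < a) (hab : a < b)
    (hgrowth : ∀ s > 0, ∫⁻ y in {y | d y < s}, g y ∂μ ≤ K * .ofReal (s ^ b)) (hr : 0 < r) :
    ∫⁻ y in {y | d y < r}, g y * .ofReal (d y ^ (-a)) ∂μ ≤
      K * .ofReal (dyadicConst a b * r ^ (b - a)) := by
  -- In `ℝ`, `0 ^ (-a) = 0`, so the singularity contributes nothing.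
  have hzero : ∫⁻ y in {y | d y = 0}, g y * .ofReal (d y ^ (-a)) ∂μ = 0 :=
    setLIntegral_eq_zero (hd (measurableSet_singleton 0)) fun y (hy : d y = 0) => by
      simp [hy, zero_rpow (neg_ne_zero.2 ha.ne')]
  have hgeom : HasSum (fun j : ℕ => (2 : ℝ) ^ a * r ^ (b - a) * (2 ^ (a - b)) ^ j)
      (2 ^ a * r ^ (b - a) * (1 - 2 ^ (a - b))⁻¹) :=
    (hasSum_geometric_of_lt_one (by positivity)
      (rpow_lt_one_of_one_lt_of_neg one_lt_two (sub_neg.2 hab))).mul_left _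
  calc ∫⁻ y in {y | d y < r}, g y * .ofReal (d y ^ (-a)) ∂μ
      ≤ ∫⁻ y in {y | d y = 0} ∪ ⋃ j, dyadicShell d r j, g y * .ofReal (d y ^ (-a)) ∂μ :=
        lintegral_mono_set (setOf_lt_subset_union_iUnion_dyadicShell hd₀)
    _ ≤ ∑' j, ∫⁻ y in dyadicShell d r j, g y * .ofReal (d y ^ (-a)) ∂μ := by
        refine (lintegral_union_le _ _ _).trans ?_
        rw [hzero, zero_add]
        exact lintegral_iUnion_le _ _
    _ ≤ ∑' j : ℕ, K * .ofReal (2 ^ a * r ^ (b - a) * (2 ^ (a - b)) ^ j) :=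
        ENNReal.tsum_le_tsum (setLIntegral_dyadicShell_mul_rpow_neg_le hd ha.le hgrowth hr)
    _ = K * .ofReal (dyadicConst a b * r ^ (b - a)) := by
        rw [ENNReal.tsum_mul_left, ← ENNReal.ofReal_tsum_of_nonneg (fun j => by positivity)
          hgeom.summable, hgeom.tsum_eq, dyadicConst, mul_right_comm]

variable {f : α → ℝ} {K : ℝ}

theorem setLIntegral_enorm_div_rpow_le (hd : Measurable d) (hd₀ : ∀ y, 0 ≤ d y)
    (hf : ∀ s > 0, IntegrableOn f {y | d y < s} μ) (ha : 0 < a) (hab : a < b)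
    (hgrowth : ∀ s > 0, ∫ y in {y | d y < s}, |f y| ∂μ ≤ K * s ^ b) (hr : 0 < r) :
    ∫⁻ y in {y | d y < r}, ‖f y / d y ^ a‖ₑ ∂μ ≤ .ofReal (dyadicConst a b * r ^ (b - a) * K) := by
  have hgrowth' : ∀ s > 0, ∫⁻ y in {y | d y < s}, ‖f y‖ₑ ∂μ ≤ .ofReal K * .ofReal (s ^ b) := by
    intro s hs
    rw [← ofReal_integral_norm_eq_lintegral_enorm (hf s hs), ← ENNReal.ofReal_mul' (by positivity)]
    exact ENNReal.ofReal_le_ofReal (hgrowth s hs)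
  have hkernel (y : α) : ‖f y / d y ^ a‖ₑ = ‖f y‖ₑ * .ofReal (d y ^ (-a)) := by
    rw [div_eq_mul_inv, ← rpow_neg (hd₀ y), enorm_mul, enorm_of_nonneg (rpow_nonneg (hd₀ y) _)]
  have hconst : 0 ≤ dyadicConst a b * r ^ (b - a) := by
    have := dyadicConst_pos hab
    positivity
  simp only [hkernel]
  rw [mul_comm _ K, ENNReal.ofReal_mul' hconst]
  exact setLIntegral_mul_rpow_neg_le hd hd₀ ha hab hgrowth' hr

theorem integrableOn_div_rpow (hd : Measurable d) (hd₀ : ∀ y, 0 ≤ d y)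
    (hf : ∀ s > 0, IntegrableOn f {y | d y < s} μ) (ha : 0 < a) (hab : a < b)
    (hgrowth : ∀ s > 0, ∫ y in {y | d y < s}, |f y| ∂μ ≤ K * s ^ b) (hr : 0 < r) :
    IntegrableOn (fun y => f y / d y ^ a) {y | d y < r} μ :=
  ⟨((hf r hr).aemeasurable.div (hd.pow_const a).aemeasurable).aestronglyMeasurable,
    (setLIntegral_enorm_div_rpow_le hd hd₀ hf ha hab hgrowth hr).trans_lt ENNReal.ofReal_lt_top⟩

theorem setIntegral_abs_div_rpow_le (hd : Measurable d) (hd₀ : ∀ y, 0 ≤ d y)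
    (hf : ∀ s > 0, IntegrableOn f {y | d y < s} μ) (ha : 0 < a) (hab : a < b)
    (hgrowth : ∀ s > 0, ∫ y in {y | d y < s}, |f y| ∂μ ≤ K * s ^ b) (hr : 0 < r) :
    ∫ y in {y | d y < r}, |f y| / d y ^ a ∂μ ≤ dyadicConst a b * r ^ (b - a) * K := by
  have hK : 0 ≤ K := by
    simpa using (integral_nonneg fun y => abs_nonneg (f y)).trans (hgrowth 1 one_pos)
  have hC : 0 < dyadicConst a b := dyadicConst_pos hab
  have hnorm (y : α) : |f y| / d y ^ a = ‖f y / d y ^ a‖ := by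
    rw [norm_div, norm_eq_abs, norm_of_nonneg (rpow_nonneg (hd₀ y) a)]
  simp only [hnorm]
  rw [integral_norm_eq_lintegral_enorm
    (integrableOn_div_rpow hd hd₀ hf ha hab hgrowth hr).aestronglyMeasurable]
  exact ENNReal.toReal_le_of_le_ofReal (by positivity)
    (setLIntegral_enorm_div_rpow_le hd hd₀ hf ha hab hgrowth hr)

end DyadicShells

theorem tendsto_iSup_zero_of_le {ι κ : Type*} [Nonempty ι] {l : Filter κ} {F : ι → κ → ℝ}
    {g : κ → ℝ} (hF : ∀ i t, 0 ≤ F i t) (hFg : ∀ᶠ t in l, ∀ i, F i t ≤ g t)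
    (hg : Tendsto g l (𝓝 0)) : Tendsto (fun t => ⨆ i, F i t) l (𝓝 0) :=
  squeeze_zero' (.of_forall fun t => Real.iSup_nonneg fun i => hF i t)
    (hFg.mono fun _ ht => ciSup_le ht) hg

theorem tendsto_const_mul_rpow_mul_const_nhdsGT_zero {e : ℝ} (he : 0 < e) (C K : ℝ) :
    Tendsto (fun r : ℝ => C * r ^ e * K) (𝓝[>] 0) (𝓝 0) := by
  have hcont : Continuous fun r : ℝ => C * r ^ e * K :=
    ((continuous_rpow_const he.le).const_mul C).mul_const K
  simpa [zero_rpow he.ne'] using (hcont.tendsto 0).mono_left nhdsWithin_le_nhds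

section BetaDist

variable {n : ℕ} {β : Fin n → ℝ}

theorem measurable_betaDist (n : ℕ) (β : Fin n → ℝ) : Measurable (betaDist n β) := by
  unfold betaDist
  fun_prop

theorem betaDist_nonneg (n : ℕ) (β x : Fin n → ℝ) : 0 ≤ betaDist n β x := by
  unfold betaDist
  positivity

theorem abs_apply_le_of_betaDist_lt (hβ : ∀ k, 0 < β k) {x : Fin n → ℝ} {r : ℝ}
    (hx : betaDist n β x < r) (k : Fin n) : |x k| ≤ (r ^ ((∑ i, β i) / n)⁻¹) ^ β k := by
  have hr : 0 < r := (betaDist_nonneg n β x).trans_lt hx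
  have hn : (0 : ℝ) < n := by exact_mod_cast k.pos
  have hsum : 0 < ∑ i, β i := Finset.sum_pos (fun i _ => hβ i) ⟨k, Finset.mem_univ k⟩
  rw [← rpow_inv_le_iff_of_pos (abs_nonneg _) (by positivity) (hβ k), ← one_div]
  calc |x k| ^ (1 / β k)
      ≤ ∑ i, |x i| ^ (1 / β i) :=
        Finset.single_le_sum (f := fun i => |x i| ^ (1 / β i)) (fun i _ => by positivity)
          (Finset.mem_univ k)
    _ ≤ r ^ ((∑ i, β i) / n)⁻¹ :=
        (le_rpow_inv_iff_of_pos (by positivity) hr.le (by positivity)).2 hx.le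

/-- The ball of centre `x` and radius `r` for the non-isotropic distance `|x - y|_β`. -/
def betaBall (n : ℕ) (β x : Fin n → ℝ) (r : ℝ) : Set (Fin n → ℝ) :=
  {y | betaDist n β (x - y) < r}

theorem isBounded_betaBall (hβ : ∀ k, 0 < β k) (x : Fin n → ℝ) (r : ℝ) :
    Bornology.IsBounded (betaBall n β x r) := by
  refine (Metric.isBounded_Icc (fun k => x k - (r ^ ((∑ i, β i) / n)⁻¹) ^ β k)
    (fun k => x k + (r ^ ((∑ i, β i) / n)⁻¹) ^ β k)).subset fun y hy => ?_
  have hcoord (k : Fin n) := abs_sub_le_iff.1 (abs_apply_le_of_betaDist_lt hβ hy k)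
  exact ⟨fun k => sub_le_comm.1 (hcoord k).1, fun k => sub_le_iff_le_add'.1 (hcoord k).2⟩

end BetaDist

/-- The integral `∫_{|x-y|_β < r} |V(y)| / |x-y|_β^{(n-p)·2|β|/n} dy`, whose supremum over `x` is
the Stummel modulus. -/
noncomputable def stummelIntegral (n : ℕ) (β : Fin n → ℝ) (p : ℝ) (V : (Fin n → ℝ) → ℝ)
    (x : Fin n → ℝ) (r : ℝ) : ℝ :=
  ∫ y in betaBall n β x r, |V y| / betaDist n β (x - y) ^ bexp n β p

theorem stummelIntegral_nonneg (n : ℕ) (β : Fin n → ℝ) (p : ℝ) (V : (Fin n → ℝ) → ℝ)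
    (x : Fin n → ℝ) (r : ℝ) : 0 ≤ stummelIntegral n β p V x r :=
  integral_nonneg fun _ => div_nonneg (abs_nonneg _) (rpow_nonneg (betaDist_nonneg _ _ _) _)

theorem morrey_subset_stummel_general (n : ℕ) (hn : 1 ≤ n) (β : Fin n → ℝ) (hβ : ∀ k, 0 < β k)
    (p lam : ℝ) (hpn : p < n) (hlam : (n : ℝ) - p < lam) :
    ∃ C > 0, ∀ V : (Fin n → ℝ) → ℝ, LocallyIntegrable V volume → ∀ K : ℝ,
      (∀ x : Fin n → ℝ, ∀ r > 0,
        ∫ y in betaBall n β x r, |V y| ≤ K * r ^ (lam * (2 * (∑ k, β k) / n))) →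
      (∀ x : Fin n → ℝ, ∀ r > 0, IntegrableOn
        (fun y => V y / betaDist n β (x - y) ^ bexp n β p) (betaBall n β x r)) ∧
      (∀ x : Fin n → ℝ, ∀ r > 0, stummelIntegral n β p V x r ≤
        C * r ^ ((lam - ((n : ℝ) - p)) * (2 * (∑ k, β k) / n)) * K) ∧
      (∀ r > 0, BddAbove (range fun x => stummelIntegral n β p V x r)) ∧
      Tendsto (stummel n β p V) (𝓝[>] 0) (𝓝 0) := by
  have hc : 0 < 2 * (∑ k, β k) / n :=
    have hsum : 0 < ∑ k, β k := Finset.sum_pos (fun k _ => hβ k) ⟨⟨0, hn⟩, Finset.mem_univ _⟩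
    div_pos (mul_pos two_pos hsum) (by exact_mod_cast hn)
  have ha : 0 < bexp n β p := mul_pos (sub_pos.2 hpn) hc
  have hab : bexp n β p < lam * (2 * (∑ k, β k) / n) := mul_lt_mul_of_pos_right hlam hc
  refine ⟨dyadicConst (bexp n β p) (lam * (2 * (∑ k, β k) / n)), dyadicConst_pos hab,
    fun V hV K hmorrey => ?_⟩
  have hdist (x : Fin n → ℝ) : Measurable fun y => betaDist n β (x - y) :=
    (measurable_betaDist n β).comp (measurable_id.const_sub x)
  have hnonneg (x y : Fin n → ℝ) : 0 ≤ betaDist n β (x - y) := betaDist_nonneg n β (x - y)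
  have hVball (x : Fin n → ℝ) (s : ℝ) (_ : s > 0) : IntegrableOn V (betaBall n β x s) :=
    (hV.integrableOn_isCompact (isBounded_betaBall hβ x s).isCompact_closure).mono_set
      subset_closure
  have hbound (x : Fin n → ℝ) (r : ℝ) (hr : r > 0) :=
    setIntegral_abs_div_rpow_le (hdist x) (hnonneg x) (hVball x) ha hab (hmorrey x) hr
  simp only [bexp, ← sub_mul] at hbound
  exact ⟨fun x r => integrableOn_div_rpow (hdist x) (hnonneg x) (hVball x) ha hab (hmorrey x),
    hbound, fun r hr => ⟨_, forall_mem_range.2 fun x => hbound x r hr⟩,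
    tendsto_iSup_zero_of_le (stummelIntegral_nonneg n β p V)
      (eventually_mem_nhdsWithin.mono fun r hr x => hbound x r hr)
      (tendsto_const_mul_rpow_mul_const_nhdsGT_zero (mul_pos (sub_pos.2 hlam) hc) _ K)⟩

/-- if `V` lies in the non-isotropic Morrey space `L_{1,λ}^β` (with any bound `K`
for its Morrey norm), then the Stummel-kernel integrals are controlled by
`C · r^{(λ-(n-p))·2|β|/n} · K`; in particular `V` lies in the Stummel class `S_p^β`
(the Stummel modulus is finite and tends to `0` as `r → 0⁺`). -/
theorem morrey_subset_stummel
    (n : ℕ) (hn : 1 ≤ n) (β : Fin n → ℝ) (hβ : ∀ k, (1:ℝ)/2 ≤ β k)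
    (p lam : ℝ) (hp1 : 1 < p) (hpn : p < n) (hlam1 : (n:ℝ) - p < lam) (hlam2 : lam < n) :
    ∃ C > 0, ∀ V : (Fin n → ℝ) → ℝ, LocallyIntegrable V volume →
      ∀ K : ℝ,
        (∀ x : Fin n → ℝ, ∀ r > 0,
          (∫ y in {y : Fin n → ℝ | betaDist n β (x - y) < r}, |V y|) ≤
            K * r ^ (lam * (2 * (∑ k, β k) / n))) →
        (∀ x : Fin n → ℝ, ∀ r > 0,
            (∫ y in {y : Fin n → ℝ | betaDist n β (x - y) < r},
                |V y| / betaDist n β (x - y) ^ bexp n β p) ≤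
              C * r ^ ((lam - ((n:ℝ) - p)) * (2 * (∑ k, β k) / n)) * K) ∧
        (∀ r > 0, BddAbove (Set.range fun x : Fin n → ℝ =>
            ∫ y in {y : Fin n → ℝ | betaDist n β (x - y) < r},
              |V y| / betaDist n β (x - y) ^ bexp n β p)) ∧
        Tendsto (stummel n β p V) (𝓝[>] (0:ℝ)) (𝓝 0) := by
  obtain ⟨C, hC, h⟩ := morrey_subset_stummel_general n hn β
    (fun k => one_half_pos.trans_le (hβ k)) p lam hpn hlam1
  exact ⟨C, hC, fun V hV K hmorrey => (h V hV K hmorrey).2⟩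
end

section
/- Let n ≥ 3, δ := e^{−3}, and f(x) := χ_{B_β(0,δ)}(x) / ( |x|_β² · |log |x|_β|⁶ ). Then for every λ > n − 2, sup_{r > 0} r^{−λ} ∫_{{y : |y|_β < r}} f(y) dy = +∞; that is, f does not belong to the non-isotropic Morrey space defined by the finiteness of sup_{x∈ℝⁿ, r>0} r^{−λ} ∫_{{y : |x−y|_β < r}} |f(y)| dy for any λ > n − 2. -/
open MeasureTheory Real Set Filter Topology

/-- The example function `f(x) = χ_{B_β(0,e⁻³)}(x) / (|x|_β² |log |x|_β|⁶)`. -/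
noncomputable def fex (n : ℕ) (β : Fin n → ℝ) (x : Fin n → ℝ) : ℝ :=
  Set.indicator {z : Fin n → ℝ | betaDist n β z < Real.exp (-3)}
    (fun z => 1 / (betaDist n β z ^ (2:ℝ) * |Real.log (betaDist n β z)| ^ (6:ℝ))) x

/-!
The dilations `x ↦ (t ^ (n βₖ / |β|) xₖ)ₖ` multiply the β-distance by `t` and have determinant
`t ^ n`, so the β-ball of radius `r` has volume `V r ^ n`. The profile `g s = s⁻² |log s|⁻⁶` is
decreasing on `(0, e⁻³]`; hence `f ≥ g r` on the β-ball of radius `r`, and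
`r ^ (-λ) ∫ f ≥ V r ^ (n - λ - 2) |log r|⁻⁶ → ∞` as `r → 0⁺`.

The lower bound for the Bochner integral needs `f` to be integrable. On the shell
`e⁻ᵐ ≤ |x|_β < e¹⁻ᵐ` we have `f ≤ g (e⁻ᵐ) = e²ᵐ m⁻⁶`, while the volume is at most `V eⁿ e⁻ⁿᵐ`, so
the integral of `f` is at most `V eⁿ ∑ m⁻⁶` once `n ≥ 2`.
-/

open scoped ENNReal

theorem integrable_of_tsum_mul_measure_ne_top {α ι E : Type*} [MeasurableSpace α]
    {μ : Measure α} [NormedAddCommGroup E] [Countable ι] {f : α → E}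
    (hf : AEStronglyMeasurable f μ) {s : ι → Set α} (hs : ∀ i, MeasurableSet (s i))
    {c : ι → ℝ≥0∞} (hsum : ∑' i, c i * μ (s i) ≠ ∞)
    (hbound : ∀ x, f x ≠ 0 → ∃ i, x ∈ s i ∧ ‖f x‖ₑ ≤ c i) : Integrable f μ := by
  have hpointwise (x : α) : ‖f x‖ₑ ≤ ∑' i, (s i).indicator (fun _ => c i) x := by
    by_cases hx : f x = 0
    · simp [hx]
    · obtain ⟨i, hxi, hle⟩ := hbound x hx
      calc ‖f x‖ₑ ≤ (s i).indicator (fun _ => c i) x := by rwa [indicator_of_mem hxi]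
        _ ≤ _ := ENNReal.le_tsum i
  refine ⟨hf, hasFiniteIntegral_iff_enorm.2 ?_⟩
  calc ∫⁻ x, ‖f x‖ₑ ∂μ ≤ ∫⁻ x, ∑' i, (s i).indicator (fun _ => c i) x ∂μ :=
        lintegral_mono hpointwise
    _ = ∑' i, ∫⁻ x, (s i).indicator (fun _ => c i) x ∂μ :=
        lintegral_tsum fun i => (measurable_const.indicator (hs i)).aemeasurable
    _ = ∑' i, c i * μ (s i) := by simp only [lintegral_indicator_const (hs _)]
    _ < ∞ := hsum.lt_top

theorem abs_log_mul_rpow_monotoneOn {a : ℝ} (ha : 0 < a) :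
    MonotoneOn (fun s => |log s| * s ^ a) (Ioc 0 (exp (-a⁻¹))) := by
  have abs_log_mul_rpow {s : ℝ} (hs : s ∈ Ioc 0 (exp (-a⁻¹))) :
      |log s| * s ^ a = log s⁻¹ / s⁻¹ ^ a := by
    have hs1 : s ≤ 1 := hs.2.trans (exp_le_one_iff.2 (by simpa using ha.le))
    rw [abs_of_nonpos (log_nonpos hs.1.le hs1), log_inv, inv_rpow hs.1.le, div_inv_eq_mul]
  have inv_mem {s : ℝ} (hs : s ∈ Ioc 0 (exp (-a⁻¹))) : s⁻¹ ∈ Ici (exp a⁻¹) := by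
    rw [mem_Ici, le_inv_comm₀ (exp_pos _) hs.1, ← exp_neg]
    exact hs.2
  intro s hs t ht hst
  simp only [abs_log_mul_rpow hs, abs_log_mul_rpow ht]
  exact log_div_self_rpow_antitoneOn ha (inv_mem ht) (inv_mem hs) (inv_anti₀ hs.1 hst)

/-- The radial profile of `fex`: on the β-ball of radius `e⁻³`, `fex n β x` is
`radialProfile (betaDist n β x)`. It takes the junk value `0` at `0` and at `1`. -/
noncomputable def radialProfile (s : ℝ) : ℝ :=
  1 / (s ^ (2 : ℝ) * |log s| ^ (6 : ℝ))

namespace radialProfile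

theorem nonneg {s : ℝ} (hs : 0 ≤ s) : 0 ≤ radialProfile s := by
  unfold radialProfile
  positivity

theorem measurable : Measurable radialProfile := by
  have measurable_abs_log : Measurable fun s => |log s| :=
    continuous_abs.measurable.comp measurable_log
  exact measurable_const.div
    ((measurable_id.pow_const _).mul (measurable_abs_log.pow_const _))

theorem rpow_mul_eq (a : ℝ) {s : ℝ} (hs : 0 < s) :
    s ^ a * radialProfile s = ((|log s| * s ^ ((2 - a) / 6)) ^ 6)⁻¹ := by
  have hpow : (s ^ ((2 - a) / 6)) ^ 6 = s ^ (2 : ℝ) / s ^ a := by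
    rw [← rpow_mul_natCast hs.le, ← rpow_sub hs]
    norm_num
  rw [mul_pow, hpow, radialProfile, ← rpow_natCast |log s| 6]
  have := (rpow_pos_of_pos hs a).ne'
  push_cast
  field_simp

theorem exp_neg_natCast (m : ℕ) :
    radialProfile (exp (-m)) = exp (2 * m) * ((m : ℝ) ^ 6)⁻¹ := by
  have hexp : exp (-m) ^ (2 : ℝ) = (exp (2 * m))⁻¹ := by
    rw [← exp_mul, ← exp_neg]
    ring_nf
  rw [radialProfile, hexp, log_exp, abs_neg, Nat.abs_cast, ← rpow_natCast]
  push_cast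
  field_simp

-- The radius `e⁻³` is the one below which `|log s| * s ^ (1/3)` is monotone.
theorem antitoneOn : AntitoneOn radialProfile (Ioc 0 (exp (-3))) := by
  intro s hs t ht hst
  have profile_eq {u : ℝ} (hu : 0 < u) :
      radialProfile u = ((|log u| * u ^ (1 / 3 : ℝ)) ^ 6)⁻¹ := by
    simpa only [rpow_zero, one_mul, show ((2 : ℝ) - 0) / 6 = 1 / 3 by norm_num]
      using rpow_mul_eq 0 hu
  have hmono : MonotoneOn (fun u => |log u| * u ^ (1 / 3 : ℝ)) (Ioc 0 (exp (-3))) := by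
    simpa using abs_log_mul_rpow_monotoneOn (a := 1 / 3) (by norm_num)
  have hs1 : s < 1 := hs.2.trans_lt (by simp)
  have hlog : 0 < |log s| := abs_pos.2 (log_neg hs.1 hs1).ne
  have hpow : 0 < s ^ (1 / 3 : ℝ) := rpow_pos_of_pos hs.1 _
  rw [profile_eq hs.1, profile_eq ht.1]
  exact inv_anti₀ (by positivity) (pow_le_pow_left₀ (by positivity) (hmono hs ht hst) 6)

theorem tendsto_rpow_mul_atTop {a : ℝ} (ha : a < 2) :
    Tendsto (fun r => r ^ a * radialProfile r) (𝓝[>] 0) atTop := by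
  have hzero : Tendsto (fun r => (|log r| * r ^ ((2 - a) / 6)) ^ 6) (𝓝[>] 0) (𝓝 0) := by
    have h := (tendsto_log_mul_rpow_nhdsGT_zero (r := (2 - a) / 6) (by linarith)).pow 6
    simpa only [mul_pow, Even.pow_abs (by decide : Even 6), zero_pow (by decide : 6 ≠ 0)] using h
  have hpos : ∀ᶠ r : ℝ in 𝓝[>] 0, 0 < (|log r| * r ^ ((2 - a) / 6)) ^ 6 := by
    filter_upwards [Ioo_mem_nhdsGT one_pos] with r hr
    have : 0 < |log r| := abs_pos.2 (log_neg hr.1 hr.2).ne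
    have : 0 < r := hr.1
    positivity
  refine (tendsto_inv_nhdsGT_zero.comp
    (tendsto_nhdsWithin_iff.2 ⟨hzero, hpos⟩)).congr' ?_
  filter_upwards [self_mem_nhdsWithin] with r hr
  exact (rpow_mul_eq a hr).symm

end radialProfile

namespace betaDist

variable {n : ℕ} {β : Fin n → ℝ}

theorem nonneg (x : Fin n → ℝ) : 0 ≤ betaDist n β x :=
  rpow_nonneg (Finset.sum_nonneg fun _ _ => rpow_nonneg (abs_nonneg _) _) _

theorem rpow_abs_apply_le_sum (x : Fin n → ℝ) (k : Fin n) :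
    |x k| ^ (1 / β k) ≤ ∑ j, |x j| ^ (1 / β j) :=
  Finset.single_le_sum (f := fun j => |x j| ^ (1 / β j))
    (fun _ _ => rpow_nonneg (abs_nonneg _) _) (Finset.mem_univ k)

theorem pos {x : Fin n → ℝ} (hx : x ≠ 0) : 0 < betaDist n β x := by
  obtain ⟨k, hk⟩ := Function.ne_iff.1 hx
  exact rpow_pos_of_pos
    ((rpow_pos_of_pos (abs_pos.2 hk) _).trans_le (rpow_abs_apply_le_sum x k)) _

theorem continuous (hβ : ∀ k, 0 < β k) : Continuous (betaDist n β) := by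
  have hexp (k : Fin n) : 0 ≤ 1 / β k := (one_div_pos.2 (hβ k)).le
  have hsum : 0 ≤ (∑ k, β k) / n :=
    div_nonneg (Finset.sum_nonneg fun k _ => (hβ k).le) n.cast_nonneg
  unfold betaDist
  exact (continuous_finsetSum _ fun k _ =>
    (continuous_apply k).abs.rpow_const fun _ => .inr (hexp k)).rpow_const fun _ => .inr hsum

theorem measurable : Measurable (betaDist n β) := by
  unfold betaDist
  fun_prop

theorem measurableSet_lt (r : ℝ) : MeasurableSet {x | betaDist n β x < r} :=
  measurable measurableSet_Iio

theorem abs_apply_lt_one (hβ : ∀ k, 0 < β k) {x : Fin n → ℝ} (hx : betaDist n β x < 1)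
    (k : Fin n) : |x k| < 1 := by
  contrapose! hx
  have hcoord : 1 ≤ |x k| ^ (1 / β k) := one_le_rpow hx (one_div_pos.2 (hβ k)).le
  exact one_le_rpow (hcoord.trans (rpow_abs_apply_le_sum x k))
    (div_nonneg (Finset.sum_nonneg fun j _ => (hβ j).le) n.cast_nonneg)

theorem volume_lt_one_ne_top (hβ : ∀ k, 0 < β k) : volume {x | betaDist n β x < 1} ≠ ∞ := by
  have hsubset : {x | betaDist n β x < 1} ⊆ univ.pi fun _ => Ioo (-1) 1 :=
    fun _ hx k _ => abs_lt.1 (abs_apply_lt_one hβ hx k)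
  refine measure_ne_top_of_subset hsubset ?_
  rw [volume_pi_Ioo]
  exact ENNReal.prod_ne_top fun _ _ => ENNReal.ofReal_ne_top

variable [NeZero n]

theorem sum_exponents_pos (hβ : ∀ k, 0 < β k) : 0 < ∑ k, β k :=
  Finset.sum_pos (fun k _ => hβ k) Finset.univ_nonempty

theorem apply_zero (hβ : ∀ k, 0 < β k) : betaDist n β 0 = 0 := by
  have hexp (k : Fin n) : (0 : ℝ) ^ (1 / β k) = 0 := zero_rpow (one_div_pos.2 (hβ k)).ne'
  simp only [betaDist, Pi.zero_apply, abs_zero, hexp, Finset.sum_const_zero]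
  exact zero_rpow (div_ne_zero (sum_exponents_pos hβ).ne' (NeZero.ne _))

theorem volume_lt_one_pos (hβ : ∀ k, 0 < β k) : 0 < volume {x | betaDist n β x < 1} :=
  (isOpen_lt (continuous hβ) continuous_const).measure_pos volume
    ⟨0, by simp only [mem_ofPred_eq, apply_zero hβ, one_pos]⟩

end betaDist

/-- The anisotropic dilation of `ℝⁿ` for which the β-distance is homogeneous of degree one; the
exponents `n βₖ / |β|` add up to `n`. -/
noncomputable def betaDilation {n : ℕ} (β : Fin n → ℝ) (t : ℝ) :
    (Fin n → ℝ) →ₗ[ℝ] (Fin n → ℝ) :=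
  Matrix.toLin' (Matrix.diagonal fun k => t ^ (n * β k / ∑ j, β j))

section Dilation

variable {n : ℕ} [NeZero n] {β : Fin n → ℝ}

theorem betaDist_betaDilation (hβ : ∀ k, 0 < β k) {t : ℝ} (ht : 0 ≤ t) (x : Fin n → ℝ) :
    betaDist n β (betaDilation β t x) = t * betaDist n β x := by
  have hsum := (betaDist.sum_exponents_pos hβ).ne'
  have hn : (n : ℝ) ≠ 0 := NeZero.ne _
  have hcoord (k : Fin n) : |betaDilation β t x k| ^ (1 / β k) =
      t ^ (n / ∑ j, β j) * |x k| ^ (1 / β k) := by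
    rw [betaDilation, Matrix.toLin'_apply, Matrix.mulVec_diagonal, abs_mul,
      abs_of_nonneg (rpow_nonneg ht _), mul_rpow (rpow_nonneg ht _) (abs_nonneg _),
      ← rpow_mul ht]
    congr 2
    field_simp [(hβ k).ne']
  simp only [betaDist, hcoord, ← Finset.mul_sum]
  rw [mul_rpow (rpow_nonneg ht _) (Finset.sum_nonneg fun _ _ => rpow_nonneg (abs_nonneg _) _),
    ← rpow_mul ht, div_mul_div_cancel₀ hsum, div_self hn, rpow_one]

theorem det_betaDilation (hβ : ∀ k, 0 < β k) {t : ℝ} (ht : 0 < t) :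
    LinearMap.det (betaDilation β t) = t ^ n := by
  have hsum := (betaDist.sum_exponents_pos hβ).ne'
  rw [betaDilation, LinearMap.det_toLin', Matrix.det_diagonal, ← rpow_sum_of_pos ht,
    ← Finset.sum_div, ← Finset.mul_sum, mul_div_cancel_right₀ _ hsum, rpow_natCast]

theorem volume_betaDist_lt (hβ : ∀ k, 0 < β k) {r : ℝ} (hr : 0 < r) :
    volume {x | betaDist n β x < r} =
      ENNReal.ofReal (r ^ n) * volume {x | betaDist n β x < 1} := by
  have hpreimage : betaDilation β r ⁻¹' {x | betaDist n β x < r} = {x | betaDist n β x < 1} := by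
    ext x
    simp only [mem_preimage, mem_ofPred_eq, betaDist_betaDilation hβ hr.le,
      mul_lt_iff_lt_one_right hr]
  have hdet := det_betaDilation hβ hr
  have hvol := Measure.addHaar_preimage_linearMap volume
    (hdet.trans_ne (pow_pos hr n).ne') {x | betaDist n β x < r}
  rw [hpreimage, hdet, abs_of_pos (by positivity)] at hvol
  rw [hvol, ← mul_assoc, ← ENNReal.ofReal_mul (by positivity), mul_inv_cancel₀ (by positivity),
    ENNReal.ofReal_one, one_mul]

end Dilation

namespace fex

variable {n : ℕ} {β : Fin n → ℝ}

theorem eq_radialProfile {x : Fin n → ℝ} (hx : betaDist n β x < exp (-3)) :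
    fex n β x = radialProfile (betaDist n β x) :=
  indicator_of_mem (show x ∈ {z | betaDist n β z < exp (-3)} from hx) _

theorem nonneg (x : Fin n → ℝ) : 0 ≤ fex n β x :=
  indicator_nonneg (fun z _ => radialProfile.nonneg (betaDist.nonneg z)) x

theorem measurable : Measurable (fex n β) :=
  (radialProfile.measurable.comp betaDist.measurable).indicator (betaDist.measurableSet_lt _)

theorem exists_betaDist_lt_exp_and_le_radialProfile {x : Fin n → ℝ} (hx : fex n β x ≠ 0) :
    ∃ m : ℕ, betaDist n β x < exp (1 - m) ∧ fex n β x ≤ radialProfile (exp (-m)) := by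
  have hlt : betaDist n β x < exp (-3) :=
    mem_of_indicator_ne_zero (s := {z | betaDist n β z < exp (-3)}) hx
  have hpos : 0 < betaDist n β x := by
    refine (betaDist.nonneg x).lt_of_ne' fun h => hx ?_
    simp [eq_radialProfile hlt, radialProfile, h]
  have hlog : log (betaDist n β x) < -3 := (log_lt_iff_lt_exp hpos).2 hlt
  set m := ⌈-log (betaDist n β x)⌉₊
  have hle_m : -log (betaDist n β x) ≤ m := Nat.le_ceil _
  have hm_lt : (m : ℝ) < -log (betaDist n β x) + 1 := Nat.ceil_lt_add_one (by linarith)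
  have hm : exp (-m) ≤ betaDist n β x := (le_log_iff_exp_le hpos).1 (by linarith)
  refine ⟨m, (log_lt_iff_lt_exp hpos).1 (by linarith), ?_⟩
  rw [eq_radialProfile hlt]
  exact radialProfile.antitoneOn ⟨exp_pos _, hm.trans hlt.le⟩ ⟨hpos, hlt.le⟩ hm

theorem integrable (hn : 2 ≤ n) (hβ : ∀ k, 0 < β k) : Integrable (fex n β) := by
  have : NeZero n := ⟨by lia⟩
  have hterm (m : ℕ) : radialProfile (exp (-m)) * exp (1 - m) ^ n ≤ exp n * ((m : ℝ) ^ 6)⁻¹ := by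
    have hn' : (2 : ℝ) ≤ n := by exact_mod_cast hn
    have hexp : exp (2 * m) * exp (1 - m) ^ n ≤ exp n := by
      rw [← exp_nat_mul, ← exp_add, exp_le_exp]
      linarith [mul_nonneg (sub_nonneg.2 hn') m.cast_nonneg]
    calc radialProfile (exp (-m)) * exp (1 - m) ^ n
        = exp (2 * m) * exp (1 - m) ^ n * ((m : ℝ) ^ 6)⁻¹ := by
          rw [radialProfile.exp_neg_natCast]; ring
      _ ≤ _ := by gcongr
  have hprofile (m : ℕ) : 0 ≤ radialProfile (exp (-m)) := radialProfile.nonneg (exp_pos _).le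
  have hsummable : Summable fun m : ℕ => radialProfile (exp (-m)) * exp (1 - m) ^ n :=
    .of_nonneg_of_le (fun m => mul_nonneg (hprofile m) (by positivity)) hterm
      ((summable_nat_pow_inv.2 (by norm_num)).mul_left _)
  refine integrable_of_tsum_mul_measure_ne_top measurable.aestronglyMeasurable
    (s := fun m : ℕ => {x | betaDist n β x < exp (1 - m)})
    (c := fun m => ENNReal.ofReal (radialProfile (exp (-m))))
    (fun m => betaDist.measurableSet_lt _) ?_ fun x hx => ?_
  · simp only [volume_betaDist_lt hβ (exp_pos _), ← mul_assoc, ← ENNReal.ofReal_mul (hprofile _),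
      ENNReal.tsum_mul_right]
    exact ENNReal.mul_ne_top hsummable.tsum_ofReal_ne_top (betaDist.volume_lt_one_ne_top hβ)
  · obtain ⟨m, hlt, hle⟩ := exists_betaDist_lt_exp_and_le_radialProfile hx
    exact ⟨m, hlt, by rw [enorm_of_nonneg (nonneg x)]; exact ENNReal.ofReal_le_ofReal hle⟩

theorem radialProfile_mul_volume_le_setIntegral (hn : 2 ≤ n) (hβ : ∀ k, 0 < β k) {r : ℝ}
    (hr : 0 < r) (hr' : r ≤ exp (-3)) :
    radialProfile r * (r ^ n * volume.real {x | betaDist n β x < 1}) ≤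
      ∫ x in {x | betaDist n β x < r}, fex n β x := by
  have : NeZero n := ⟨by lia⟩
  have hvol := volume_betaDist_lt hβ hr
  have hfinite : volume {x | betaDist n β x < r} ≠ ∞ := by
    rw [hvol]
    exact ENNReal.mul_ne_top ENNReal.ofReal_ne_top (betaDist.volume_lt_one_ne_top hβ)
  have hbound : ∀ᵐ x : Fin n → ℝ, betaDist n β x < r → radialProfile r ≤ fex n β x := by
    filter_upwards [volume.ae_ne 0] with x hx0 hxr
    rw [eq_radialProfile (hxr.trans_le hr')]
    exact radialProfile.antitoneOn ⟨betaDist.pos hx0, hxr.le.trans hr'⟩ ⟨hr, hr'⟩ hxr.le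
  calc radialProfile r * (r ^ n * volume.real {x | betaDist n β x < 1})
      = ∫ _ in {x | betaDist n β x < r}, radialProfile r := by
        rw [setIntegral_const, smul_eq_mul, mul_comm, measureReal_def, measureReal_def, hvol,
          ENNReal.toReal_mul, ENNReal.toReal_ofReal (by positivity)]
    _ ≤ ∫ x in {x | betaDist n β x < r}, fex n β x :=
        setIntegral_mono_on_ae (integrableOn_const hfinite) (integrable hn hβ).integrableOn
          (betaDist.measurableSet_lt r) hbound

end fex

theorem example_function_not_in_morrey_general {n : ℕ} (hn : 2 ≤ n) {β : Fin n → ℝ}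
    (hβ : ∀ k, 0 < β k) {lam : ℝ} (hlam : (n : ℝ) - 2 < lam) :
    Tendsto (fun r => r ^ (-lam) * ∫ y in {y | betaDist n β y < r}, fex n β y)
      (𝓝[>] 0) atTop := by
  have : NeZero n := ⟨by lia⟩
  have hV : 0 < volume.real {x | betaDist n β x < 1} :=
    ENNReal.toReal_pos (betaDist.volume_lt_one_pos hβ).ne' (betaDist.volume_lt_one_ne_top hβ)
  refine tendsto_atTop_mono' _ ?_ ((radialProfile.tendsto_rpow_mul_atTop
    (show n - lam < 2 by linarith)).atTop_mul_const hV)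
  filter_upwards [Ioc_mem_nhdsGT (exp_pos (-3))] with r ⟨hr, hr'⟩
  calc r ^ (n - lam) * radialProfile r * volume.real {x | betaDist n β x < 1}
      = r ^ (-lam) *
          (radialProfile r * (r ^ n * volume.real {x | betaDist n β x < 1})) := by
        rw [sub_eq_neg_add, rpow_add hr, rpow_natCast]
        ring
    _ ≤ _ := by
        gcongr
        exact fex.radialProfile_mul_volume_le_setIntegral hn hβ hr hr'

/-- the example function does not belong to the non-isotropic Morrey
space for any `λ > n - 2`: the quantity `r^{-λ} ∫_{|y|_β<r} f(y) dy` is unbounded. -/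
theorem example_function_not_in_morrey
    (n : ℕ) (hn : 3 ≤ n) (β : Fin n → ℝ) (hβ : ∀ k, (1:ℝ)/2 ≤ β k) :
    ∀ lam : ℝ, (n:ℝ) - 2 < lam → ∀ M : ℝ, ∃ r > 0,
      M < r ^ (-lam) * ∫ y in {y : Fin n → ℝ | betaDist n β y < r}, fex n β y := by
  intro lam hlam M
  have hlim := example_function_not_in_morrey_general (by lia : 2 ≤ n)
    (fun k => one_half_pos.trans_le (hβ k)) hlam
  exact (eventually_mem_nhdsWithin.and (hlim.eventually_gt_atTop M)).exists
end
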